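/- Uniqueness of the fundamental solution: Suppose Γ₁ and Γ₂ are two families (Γ_k(t,s))_{t,s∈ℝ} of bounded operators on H satisfying: (1) uniform boundedness sup_{t,s} ‖Γ_k(t,s)‖ < ∞; (2) causality Γ_k(t,s) = 0 for s > t; (3) Borel measurability of (t,s) ↦ ⟨Γ_k(t,s)a, ã⟩ for a, ã in a fixed countable dense subset D of H; (4) for all φ ∈ C_c^∞(ℝ) and a ∈ D, the weak solution u of ∂_t u + 𝓑u = φ ⊗ a satisfies ⟨u(t), ã⟩ = ∫_{-∞}^t φ(s)⟨Γ_k(t,s)a, ã⟩ ds for a.e. t and all ã ∈ D. Then Γ₁(t,s) = Γ₂(t,s) for almost every (t,s) ∈ ℝ². -/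

import Mathlib

open MeasureTheory Filter Set
open scoped ENNReal Topology ComplexConjugate InnerProductSpace

noncomputable section

/-!
Test functions on `ℝ` form a separable space: countably many of them already determine all the
functionals `φ ↦ ∫ φ f` with `f` locally integrable.  Hence identities that hold for each test
function at almost every `t` hold, at almost every `t`, for all test functions simultaneously, and
the fundamental lemma of the calculus of variations identifies the two kernels
`s ↦ ⟪b, Γₖ t s a⟫`, `s ≤ t`, at such a `t`.
-/

section TestFunctions

variable {X F : Type*} [TopologicalSpace X] [MeasurableSpace X] [OpensMeasurableSpace X]
  [NormedAddCommGroup F] [NormedSpace ℝ F]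

theorem continuousOn_integral_smul_of_integrableOn [LocallyCompactSpace X] {K : Set X}
    (hK : IsCompact K) {ν : Measure X} {f : X → F} (hf : IntegrableOn f K ν) :
    ContinuousOn (fun φ : C(X, ℝ) => ∫ x, φ x • f x ∂ν) {φ | ∀ x ∉ K, φ x = 0} :=
  continuousOn_integral_bilinear_of_locally_integrable_of_compact_support
    (ContinuousLinearMap.lsmul ℝ ℝ).flip hK continuous_eval.continuousOn
    (fun _ x hφ hx => hφ x hx) hf

variable [LocallyCompactSpace X] [SecondCountableTopology X]

variable (F) in
theorem exists_countable_subset_forall_integral_smul_eq (S : Set C(X, ℝ))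
    (hS : ∀ φ ∈ S, HasCompactSupport φ) :
    ∃ c ⊆ S, c.Countable ∧ ∀ (ν : Measure X) (f g : X → F),
      LocallyIntegrable f ν → LocallyIntegrable g ν →
      (∀ φ ∈ c, ∫ x, φ x • f x ∂ν = ∫ x, φ x • g x ∂ν) →
      ∀ φ ∈ S, ∫ x, φ x • f x ∂ν = ∫ x, φ x • g x ∂ν := by
  let K : CompactExhaustion X := default
  let supportedIn (n : ℕ) : Set C(X, ℝ) := {φ | ∀ x ∉ K n, φ x = 0}
  choose c hcS hc hSc using fun n =>
    (TopologicalSpace.IsSeparable.of_separableSpace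
      (S ∩ supportedIn n)).exists_countable_dense_subset
  refine ⟨⋃ n, c n, iUnion_subset fun n => (hcS n).trans inter_subset_left,
    countable_iUnion hc, fun ν f g hf hg hfg φ hφ => ?_⟩
  obtain ⟨n, hn⟩ := K.exists_superset_of_isCompact (hS φ hφ)
  have continuousOn {h : X → F} (hh : LocallyIntegrable h ν) :
      ContinuousOn (fun ψ : C(X, ℝ) => ∫ x, ψ x • h x ∂ν) (S ∩ supportedIn n) :=
    (continuousOn_integral_smul_of_integrableOn (K.isCompact n)
      (hh.integrableOn_isCompact (K.isCompact n))).mono inter_subset_right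
  have eqOn : EqOn (fun ψ : C(X, ℝ) => ∫ x, ψ x • f x ∂ν) (fun ψ => ∫ x, ψ x • g x ∂ν)
      (c n) := fun ψ hψ => hfg ψ (mem_iUnion_of_mem n hψ)
  exact eqOn.of_subset_closure (continuousOn hf) (continuousOn hg) (hcS n) (hSc n)
    ⟨hφ, fun x hx => image_eq_zero_of_notMem_tsupport fun h => hx (hn h)⟩

theorem ae_forall_integral_smul_eq {T : Type*} [MeasurableSpace T] {μ : Measure T}
    {ν : T → Measure X} {f g : T → X → F} (S : Set C(X, ℝ))
    (hS : ∀ φ ∈ S, HasCompactSupport φ)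
    (hf : ∀ᵐ t ∂μ, LocallyIntegrable (f t) (ν t)) (hg : ∀ᵐ t ∂μ, LocallyIntegrable (g t) (ν t))
    (hfg : ∀ φ ∈ S, ∀ᵐ t ∂μ, ∫ x, φ x • f t x ∂ν t = ∫ x, φ x • g t x ∂ν t) :
    ∀ᵐ t ∂μ, ∀ φ ∈ S, ∫ x, φ x • f t x ∂ν t = ∫ x, φ x • g t x ∂ν t := by
  obtain ⟨c, hcS, hc, hdet⟩ := exists_countable_subset_forall_integral_smul_eq F S hS
  have hfg_c := (ae_ball_iff hc).2 fun φ hφ => hfg φ (hcS hφ)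
  filter_upwards [hf, hg, hfg_c] with t hft hgt ht using hdet (ν t) (f t) (g t) hft hgt ht

end TestFunctions

section Kernels

variable {T E F : Type*} [MeasurableSpace T] {μ : Measure T} [NormedAddCommGroup E]
  [NormedSpace ℝ E] [FiniteDimensional ℝ E] [MeasurableSpace E] [BorelSpace E]
  [NormedAddCommGroup F] [NormedSpace ℝ F] [CompleteSpace F]

theorem ae_ae_eq_of_forall_ae_integral_contDiff_smul_eq {ν : T → Measure E} {f g : T → E → F}
    (hf : ∀ᵐ t ∂μ, LocallyIntegrable (f t) (ν t)) (hg : ∀ᵐ t ∂μ, LocallyIntegrable (g t) (ν t))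
    (hfg : ∀ φ : E → ℝ, ContDiff ℝ (⊤ : ℕ∞) φ → HasCompactSupport φ →
      ∀ᵐ t ∂μ, ∫ x, φ x • f t x ∂ν t = ∫ x, φ x • g t x ∂ν t) :
    ∀ᵐ t ∂μ, f t =ᵐ[ν t] g t := by
  have : ProperSpace E := FiniteDimensional.proper_real E
  let S : Set C(E, ℝ) := {φ | ContDiff ℝ (⊤ : ℕ∞) φ ∧ HasCompactSupport φ}
  have forall_test := ae_forall_integral_smul_eq S (fun _ hφ => hφ.2) hf hg
    fun φ hφ => hfg φ hφ.1 hφ.2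
  filter_upwards [hf, hg, forall_test] with t hft hgt ht
  exact ae_eq_of_integral_contDiff_smul_eq hft hgt fun φ hφ hφc =>
    ht ⟨φ, hφ.continuous⟩ ⟨hφ, hφc⟩

theorem ae_prod_eq_on_of_forall_ae_setIntegral_contDiff_smul_eq [MeasurableSpace F] [BorelSpace F]
    [SecondCountableTopology F] {ν : Measure E} [SFinite ν] {R : Set (T × E)}
    (hR : MeasurableSet R) {f g : T × E → F} (hf : Measurable f) (hg : Measurable g)
    (hf_loc : ∀ᵐ t ∂μ, LocallyIntegrable (fun x => f (t, x)) (ν.restrict (Prod.mk t ⁻¹' R)))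
    (hg_loc : ∀ᵐ t ∂μ, LocallyIntegrable (fun x => g (t, x)) (ν.restrict (Prod.mk t ⁻¹' R)))
    (hfg : ∀ φ : E → ℝ, ContDiff ℝ (⊤ : ℕ∞) φ → HasCompactSupport φ →
      ∀ᵐ t ∂μ, ∫ x in Prod.mk t ⁻¹' R, φ x • f (t, x) ∂ν =
        ∫ x in Prod.mk t ⁻¹' R, φ x • g (t, x) ∂ν) :
    ∀ᵐ p ∂μ.prod ν, p ∈ R → f p = g p := by
  have measurableSet_eq : MeasurableSet {p | p ∈ R → f p = g p} :=
    hR.imp (measurableSet_eq_fun hf hg)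
  rw [Measure.ae_prod_iff_ae_ae measurableSet_eq]
  filter_upwards [ae_ae_eq_of_forall_ae_integral_contDiff_smul_eq hf_loc hg_loc hfg] with t ht
  exact (ae_restrict_iff' (measurable_prodMk_left hR)).1 ht

end Kernels

section Operators

variable {𝕜 H : Type*} [RCLike 𝕜] [NormedAddCommGroup H] [InnerProductSpace 𝕜 H]

theorem eq_of_inner_eq_on_dense {D : Set H} (hD : Dense D) {A B : H →L[𝕜] H}
    (h : ∀ a ∈ D, ∀ b ∈ D, ⟪b, A a⟫_𝕜 = ⟪b, B a⟫_𝕜) : A = B :=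
  DFunLike.coe_injective <| A.continuous.ext_on hD B.continuous fun a ha =>
    hD.eq_of_inner_right 𝕜 (h a ha)

theorem locallyIntegrable_inner_of_forall_opNorm_le {T X : Type*} [MeasurableSpace T]
    [TopologicalSpace X] [MeasurableSpace X] {ν : Measure X} [IsLocallyFiniteMeasure ν]
    {Γ : T → X → H →L[𝕜] H} (hΓ : ∃ C : ℝ, ∀ t x, ‖Γ t x‖ ≤ C) {a b : H}
    (hm : Measurable fun p : T × X => ⟪b, Γ p.1 p.2 a⟫_𝕜) (t : T) :
    LocallyIntegrable (fun x => ⟪b, Γ t x a⟫_𝕜) ν := by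
  obtain ⟨C, hC⟩ := hΓ
  refine (locallyIntegrable_const (‖b‖ * (C * ‖a‖))).mono
    (hm.comp measurable_prodMk_left).aestronglyMeasurable (.of_forall fun x => ?_)
  calc ‖⟪b, Γ t x a⟫_𝕜‖ ≤ ‖b‖ * ‖Γ t x a‖ := norm_inner_le_norm b (Γ t x a)
    _ ≤ ‖b‖ * (C * ‖a‖) := by gcongr; exact (Γ t x).le_of_opNorm_le (hC t x) a
    _ ≤ ‖‖b‖ * (C * ‖a‖)‖ := Real.le_norm_self _

theorem fundamental_solution_unique_general {D : Set H} (hDcount : D.Countable)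
    (hDdense : Dense D) {Γ₁ Γ₂ : ℝ → ℝ → H →L[𝕜] H}
    (hmeas₁ : ∀ a ∈ D, ∀ b ∈ D, Measurable fun p : ℝ × ℝ => ⟪b, Γ₁ p.1 p.2 a⟫_𝕜)
    (hmeas₂ : ∀ a ∈ D, ∀ b ∈ D, Measurable fun p : ℝ × ℝ => ⟪b, Γ₂ p.1 p.2 a⟫_𝕜)
    (hloc₁ : ∀ a ∈ D, ∀ b ∈ D, ∀ᵐ t, LocallyIntegrableOn (fun s => ⟪b, Γ₁ t s a⟫_𝕜) (Iic t))
    (hloc₂ : ∀ a ∈ D, ∀ b ∈ D, ∀ᵐ t, LocallyIntegrableOn (fun s => ⟪b, Γ₂ t s a⟫_𝕜) (Iic t))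
    (hrep : ∀ φ : ℝ → ℝ, ContDiff ℝ (⊤ : ℕ∞) φ → HasCompactSupport φ → ∀ a ∈ D,
      ∃ u : ℝ → H,
        (∀ b ∈ D, ∀ᵐ t : ℝ, ⟪b, u t⟫_𝕜 = ∫ s in Iic t, φ s • ⟪b, Γ₁ t s a⟫_𝕜) ∧
        (∀ b ∈ D, ∀ᵐ t : ℝ, ⟪b, u t⟫_𝕜 = ∫ s in Iic t, φ s • ⟪b, Γ₂ t s a⟫_𝕜)) :
    ∀ᵐ p : ℝ × ℝ ∂((volume : Measure ℝ).prod volume),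
      p.2 ≤ p.1 → Γ₁ p.1 p.2 = Γ₂ p.1 p.2 := by
  have inner_eq : ∀ a ∈ D, ∀ b ∈ D, ∀ᵐ p : ℝ × ℝ ∂((volume : Measure ℝ).prod volume),
      p.2 ≤ p.1 → ⟪b, Γ₁ p.1 p.2 a⟫_𝕜 = ⟪b, Γ₂ p.1 p.2 a⟫_𝕜 := by
    intro a ha b hb
    have locallyIntegrable₁ := hloc₁ a ha b hb
    have locallyIntegrable₂ := hloc₂ a ha b hb
    simp only [locallyIntegrableOn_iff_locallyIntegrable_restrict isClosed_Iic]
      at locallyIntegrable₁ locallyIntegrable₂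
    refine ae_prod_eq_on_of_forall_ae_setIntegral_contDiff_smul_eq
      (measurableSet_le measurable_snd measurable_fst)
      (hmeas₁ a ha b hb) (hmeas₂ a ha b hb)
      locallyIntegrable₁ locallyIntegrable₂ fun φ hφ hφc => ?_
    obtain ⟨u, hu₁, hu₂⟩ := hrep φ hφ hφc a ha
    filter_upwards [hu₁ b hb, hu₂ b hb] with t ht₁ ht₂ using ht₁.symm.trans ht₂
  have all_inner_eq := (ae_ball_iff hDcount).2 fun a ha =>
    (ae_ball_iff hDcount).2 fun b hb => inner_eq a ha b hb
  filter_upwards [all_inner_eq] with p hp hle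
  exact eq_of_inner_eq_on_dense hDdense fun a ha b hb => hp a ha b hb hle

end Operators

/-- Uniqueness of the fundamental solution.  `H` is a separable complex Hilbert
space, `D` a countable dense subset.  `Γ₁, Γ₂` are two families of bounded
operators on `H` that are uniformly bounded, causal (`Γ(t,s) = 0` for `s > t`),
weakly Borel measurable, and both represent the (unique) weak solution of
`∂_t u + 𝓑u = φ ⊗ a` for every `φ ∈ C_c^∞(ℝ)` and `a ∈ D`:
`⟨u(t), ã⟩ = ∫_{-∞}^t φ(s) ⟨Γ_k(t,s)a, ã⟩ ds` for a.e. `t` and all `ã ∈ D`.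
Then `Γ₁ = Γ₂` almost everywhere on `ℝ²`. -/
theorem fundamental_solution_unique
    {H : Type*} [NormedAddCommGroup H] [InnerProductSpace ℂ H] [CompleteSpace H]
    [TopologicalSpace.SeparableSpace H]
    (D : Set H) (hDcount : D.Countable) (hDdense : Dense D)
    (Γ₁ Γ₂ : ℝ → ℝ → H →L[ℂ] H)
    (hbdd₁ : ∃ C : ℝ, ∀ t s₀ : ℝ, ‖Γ₁ t s₀‖ ≤ C)
    (hbdd₂ : ∃ C : ℝ, ∀ t s₀ : ℝ, ‖Γ₂ t s₀‖ ≤ C)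
    (hcausal₁ : ∀ t s₀ : ℝ, t < s₀ → Γ₁ t s₀ = 0)
    (hcausal₂ : ∀ t s₀ : ℝ, t < s₀ → Γ₂ t s₀ = 0)
    (hmeas₁ : ∀ a ∈ D, ∀ b ∈ D, Measurable fun p : ℝ × ℝ => ⟪b, Γ₁ p.1 p.2 a⟫_ℂ)
    (hmeas₂ : ∀ a ∈ D, ∀ b ∈ D, Measurable fun p : ℝ × ℝ => ⟪b, Γ₂ p.1 p.2 a⟫_ℂ)
    -- both families represent the same (unique) weak solution of
    -- `∂_t u + 𝓑u = φ ⊗ a`: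
    (hrep : ∀ φ : ℝ → ℝ, ContDiff ℝ (⊤ : ℕ∞) φ → HasCompactSupport φ → ∀ a ∈ D,
      ∃ u : ℝ → H,
        (∀ b ∈ D, ∀ᵐ t : ℝ,
          ⟪b, u t⟫_ℂ = ∫ s₀ in Set.Iic t, (φ s₀ : ℂ) * ⟪b, Γ₁ t s₀ a⟫_ℂ) ∧
        (∀ b ∈ D, ∀ᵐ t : ℝ,
          ⟪b, u t⟫_ℂ = ∫ s₀ in Set.Iic t, (φ s₀ : ℂ) * ⟪b, Γ₂ t s₀ a⟫_ℂ)) :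
    ∀ᵐ p : ℝ × ℝ ∂((volume : Measure ℝ).prod volume), Γ₁ p.1 p.2 = Γ₂ p.1 p.2 := by
  have eq_of_le := fundamental_solution_unique_general hDcount hDdense hmeas₁ hmeas₂
    (fun a ha b hb => .of_forall fun t => (locallyIntegrable_inner_of_forall_opNorm_le
      hbdd₁ (hmeas₁ a ha b hb) t).locallyIntegrableOn (Iic t))
    (fun a ha b hb => .of_forall fun t => (locallyIntegrable_inner_of_forall_opNorm_le
      hbdd₂ (hmeas₂ a ha b hb) t).locallyIntegrableOn (Iic t))
    (by simpa only [Complex.real_smul] using hrep)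
  filter_upwards [eq_of_le] with p hp
  exact (le_or_gt p.2 p.1).elim hp fun hlt => by rw [hcausal₁ _ _ hlt, hcausal₂ _ _ hlt]
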